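/- Let d ≥ 2, m ≥ 1, D = Δ^d × ℝ_+^m ⊆ ℝ^{d+m}, I = {1,…,d}, J = {d+1,…,d+m}, and let c : ℝ^{d+m} → S^{d+m} be a symmetric-matrix-valued map each of whose entries is a polynomial of degree at most 2. Then the following two conditions are equivalent. (i) For every x ∈ D the matrix c(x) is positive semidefinite, c(x)e_j = 0 for every x ∈ D with x_j = 0 (for every j ∈ I ∪ J), and Σ_{j∈I} c_{ij}(x) = 0 for every i ∈ I and every x ∈ D. (ii) There exist real numbers γ_{ij} = γ_{ji} ≥ 0 (i, j ∈ I, i ≠ j), vectors θ_{(j)} ∈ ℝ^d and π_{(j)} ∈ ℝ_+^m with π_{(j)j} = 0 (j ∈ J, with π_{(j)} indexed by J), a vector φ ∈ ℝ^m with φ_j ≥ max_{i∈I} θ_{(j)i}^− for all j ∈ J (where t^− denotes the negative part), and a symmetric matrix α ∈ S^m such that α + Diag(Π^⊤ x_J) Diag(x_J)^{−1} is positive semidefinite for all x_J ∈ ℝ^m_{++} (Π being the m×m matrix whose columns are the π_{(j)}), and such that on D: c_{ii}(x) = Σ_{j∈I, j≠i} γ_{ij} x_i x_j for i ∈ I;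 c_{ij}(x) = −γ_{ij} x_i x_j for i, j ∈ I, i ≠ j; c_{ij}(x) = 0 for i ∈ I, j ∈ J; c_{jj}(x) = α_{jj} x_j² + x_j (φ_j + θ_{(j)}^⊤ x_I + π_{(j)}^⊤ x_J) for j ∈ J; and c_{ij}(x) = α_{ij} x_i x_j for i, j ∈ J, i ≠ j. -/

import Mathlib

open Matrix MvPolynomial Finset

section QuadraticForms
variable {σ : Type*} [Fintype σ]

/-- On the hyperplane `w ⬝ᵥ x = 1`, a monomial of degree at most `n` is a product of `n` linear
forms. -/
lemma exists_prod_linear_of_degree_le (w : σ → ℝ) (n : ℕ) (s : σ →₀ ℕ) (hs : s.degree ≤ n) :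
    ∃ u : Fin n → σ → ℝ, ∀ x : σ → ℝ, w ⬝ᵥ x = 1 →
      ∏ i, x i ^ s i = ∏ k, u k ⬝ᵥ x := by
  classical
  induction n generalizing s with
  | zero =>
    have h0 : s = 0 := (Finsupp.degree_eq_zero_iff s).1 (Nat.le_zero.1 hs)
    exact ⟨fun _ => w, fun x _ => by simp [h0]⟩
  | succ n ih =>
    by_cases h0 : s = 0
    · exact ⟨fun _ => w, fun x hx => by simp [h0, hx]⟩
    · obtain ⟨a, ha⟩ := Finsupp.ne_iff.1 h0
      have hle : Finsupp.single a 1 ≤ s := by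
        rw [Finsupp.single_le_iff]
        exact Nat.one_le_iff_ne_zero.2 ha
      obtain ⟨t, rfl⟩ := exists_add_of_le hle
      have ht : t.degree ≤ n := by
        rw [map_add, Finsupp.degree_single] at hs
        omega
      obtain ⟨v, hv⟩ := ih t ht
      refine ⟨Fin.cons (Pi.single a 1) v, fun x hx => ?_⟩
      simp only [Finsupp.add_apply, pow_add, Finset.prod_mul_distrib, Fin.prod_univ_succ,
        Fin.cons_zero, Fin.cons_succ, hv x hx]
      congr 1
      rw [Finset.prod_eq_single a (fun b _ hb => by simp [hb.symm]) (by simp)]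
      simp

/-- On an affine hyperplane avoiding the origin, a polynomial of degree at most two agrees with
a quadratic form. -/
lemma exists_quadratic_form (w : σ → ℝ) (P : MvPolynomial σ ℝ) (hP : P.totalDegree ≤ 2) :
    ∃ Q : Matrix σ σ ℝ, Q.IsSymm ∧ ∀ x : σ → ℝ, w ⬝ᵥ x = 1 → eval x P = x ⬝ᵥ Q *ᵥ x := by
  have hmon : ∀ s : P.support, ∃ u : Fin 2 → σ → ℝ, ∀ x : σ → ℝ, w ⬝ᵥ x = 1 →
      ∏ i, x i ^ s.1 i = ∏ k, u k ⬝ᵥ x := fun s =>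
    exists_prod_linear_of_degree_le w 2 s.1 ((le_totalDegree s.2).trans hP)
  choose u hu using hmon
  let R : Matrix σ σ ℝ := ∑ s : P.support, P.coeff s.1 • vecMulVec (u s 0) (u s 1)
  have hR : ∀ x : σ → ℝ, w ⬝ᵥ x = 1 → eval x P = x ⬝ᵥ R *ᵥ x := by
    intro x hx
    rw [eval_eq', ← Finset.sum_coe_sort]
    simp only [R, Matrix.sum_mulVec, dotProduct_sum]
    refine Finset.sum_congr rfl fun s _ => ?_
    rw [hu s x hx, Fin.prod_univ_two, Matrix.smul_mulVec, Matrix.vecMulVec_mulVec,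
      dotProduct_smul, dotProduct_smul, dotProduct_comm x (u s 0)]
    simp
  refine ⟨(1 / 2 : ℝ) • (R + Rᵀ), ?_, fun x hx => ?_⟩
  · ext i j
    simp only [Matrix.transpose_apply, Matrix.smul_apply, Matrix.add_apply, add_comm]
  · have hT : x ⬝ᵥ Rᵀ *ᵥ x = x ⬝ᵥ R *ᵥ x := by
      rw [Matrix.mulVec_transpose, dotProduct_comm, ← dotProduct_mulVec]
    rw [hR x hx, Matrix.smul_mulVec, Matrix.add_mulVec, dotProduct_smul, dotProduct_add, hT,
      smul_eq_mul]
    ring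

/-- A quadratic form all of whose coefficients vanish away from the index `j` is divisible by
`x j`. -/
lemma quadratic_form_eq_mul [DecidableEq σ] {Q : Matrix σ σ ℝ} (hQ : Q.IsSymm) {j : σ}
    (h : ∀ a b, a ≠ j → b ≠ j → Q a b = 0) (x : σ → ℝ) :
    x ⬝ᵥ Q *ᵥ x = x j * (Q j j * x j + ∑ a ∈ univ.erase j, 2 * Q j a * x a) := by
  have hrow : ∀ a ∈ univ.erase j, x a * (Q *ᵥ x) a = x j * (Q j a * x a) := by
    intro a ha
    have haj := Finset.ne_of_mem_erase ha
    rw [mulVec, dotProduct, Finset.sum_eq_single j (fun b _ hb => by rw [h a b haj hb, zero_mul])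
      (by simp), ← hQ.apply]
    ring
  have hj : (Q *ᵥ x) j = Q j j * x j + ∑ a ∈ univ.erase j, Q j a * x a :=
    (Finset.add_sum_erase univ (fun a => Q j a * x a) (Finset.mem_univ j)).symm
  rw [dotProduct, ← Finset.add_sum_erase _ _ (Finset.mem_univ j), Finset.sum_congr rfl hrow, hj,
    ← Finset.mul_sum]
  simp only [mul_assoc, ← Finset.mul_sum]
  ring

/-- A quadratic form whose coefficients vanish away from `j` and away from `k` is a multiple of
`x j * x k`. -/
lemma quadratic_form_eq_mul_mul [DecidableEq σ] {Q : Matrix σ σ ℝ} (hQ : Q.IsSymm) {j k : σ}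
    (hjk : j ≠ k) (hj : ∀ a b, a ≠ j → b ≠ j → Q a b = 0)
    (hk : ∀ a b, a ≠ k → b ≠ k → Q a b = 0) (x : σ → ℝ) :
    x ⬝ᵥ Q *ᵥ x = 2 * Q j k * x j * x k := by
  rw [quadratic_form_eq_mul hQ hj, hk j j hjk hjk,
    Finset.sum_eq_single k (fun b _ hb => by rw [hk j b hjk hb]; ring)
      (fun h => absurd (Finset.mem_erase.2 ⟨hjk.symm, Finset.mem_univ k⟩) h)]
  ring

end QuadraticForms

/-- A quadratic form vanishing on a facet `x j = 0` of the product of a simplex and an orthant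
has no coefficients away from `j`. -/
lemma coeff_eq_zero_of_vanish_on_facet {d m : ℕ} (hd : 2 ≤ d)
    {Q : Matrix (Fin d ⊕ Fin m) (Fin d ⊕ Fin m) ℝ} (hQ : Q.IsSymm) {j : Fin d ⊕ Fin m}
    (h : ∀ x : Fin d ⊕ Fin m → ℝ, (∀ k, 0 ≤ x k) → ∑ i, x (Sum.inl i) = 1 → x j = 0 →
      x ⬝ᵥ Q *ᵥ x = 0)
    (a b : Fin d ⊕ Fin m) (ha : a ≠ j) (hb : b ≠ j) : Q a b = 0 := by
  have hcone : ∀ x : Fin d ⊕ Fin m → ℝ, (∀ k, 0 ≤ x k) → 0 < ∑ i, x (Sum.inl i) → x j = 0 →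
      x ⬝ᵥ Q *ᵥ x = 0 := by
    intro x hx hpos hxj
    set r := ∑ i, x (Sum.inl i) with hr
    have := h (r⁻¹ • x) (fun k => mul_nonneg (inv_nonneg.2 hpos.le) (hx k))
      (by simp only [Pi.smul_apply, smul_eq_mul, ← Finset.mul_sum, ← hr]
          exact inv_mul_cancel₀ hpos.ne') (by simp [hxj])
    rw [Matrix.mulVec_smul, dotProduct_smul, smul_dotProduct, smul_eq_mul, smul_eq_mul] at this
    simpa [hpos.ne'] using this
  obtain ⟨i, hi⟩ : ∃ i : Fin d, Sum.inl i ≠ j := by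
    by_contra! hcon
    have := Sum.inl_injective ((hcon ⟨0, by omega⟩).trans (hcon ⟨1, by omega⟩).symm)
    simp at this
  have key : ∀ s t : ℝ, 0 ≤ s → 0 ≤ t →
      Q (Sum.inl i) (Sum.inl i) + s ^ 2 * Q a a + t ^ 2 * Q b b + 2 * s * Q (Sum.inl i) a
        + 2 * t * Q (Sum.inl i) b + 2 * s * t * Q a b = 0 := by
    intro s t hs ht
    have hnn : ∀ (r : ℝ) (k l : Fin d ⊕ Fin m), 0 ≤ r → 0 ≤ (Pi.single k r : _ → ℝ) l :=
      fun r k l hr => (Pi.single_nonneg.2 hr : (0 : Fin d ⊕ Fin m → ℝ) ≤ Pi.single k r) l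
    have := hcone (Pi.single (Sum.inl i) 1 + Pi.single a s + Pi.single b t)
      (fun k => add_nonneg (add_nonneg (hnn _ _ _ zero_le_one) (hnn _ _ _ hs)) (hnn _ _ _ ht))
      (Finset.sum_pos' (fun k _ => add_nonneg (add_nonneg (hnn _ _ _ zero_le_one)
        (hnn _ _ _ hs)) (hnn _ _ _ ht)) ⟨i, Finset.mem_univ i, by
          have h1 := hnn s a (Sum.inl i) hs
          have h2 := hnn t b (Sum.inl i) ht
          simp only [Pi.add_apply, Pi.single_eq_same]
          linarith⟩)
      (by simp [hi.symm, ha.symm, hb.symm])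
    simp only [Matrix.mulVec_add, dotProduct_add, add_dotProduct, Matrix.mulVec_single,
      single_dotProduct, Pi.smul_apply, Matrix.col_apply, MulOpposite.smul_eq_mul_unop,
      MulOpposite.unop_op] at this
    rw [hQ.apply (Sum.inl i) a, hQ.apply (Sum.inl i) b, hQ.apply a b] at this
    linarith
  have h1 := key 0 0 le_rfl le_rfl
  have h2 := key 1 0 zero_le_one le_rfl
  have h3 := key 2 0 zero_le_two le_rfl
  have h4 := key 0 1 le_rfl zero_le_one
  have h5 := key 0 2 le_rfl zero_le_two
  have h6 := key 1 1 zero_le_one zero_le_one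
  linarith

lemma nonneg_of_forall_pos_sq_mul_add {A B : ℝ} (h : ∀ s : ℝ, 0 < s → 0 ≤ s ^ 2 * A + s * B) :
    0 ≤ A := by
  by_contra! hA
  have hs : 0 < (|B| + 1) / (-A) := div_pos (by positivity) (by linarith)
  have h1 := h _ hs
  have h2 : (|B| + 1) / (-A) * A = -(|B| + 1) := by
    have := hA.ne
    field_simp
  have h3 : 0 ≤ (|B| + 1) / (-A) * A + B := by
    refine nonneg_of_mul_nonneg_right ?_ hs
    linarith
  have := le_abs_self B
  linarith

lemma nonneg_of_forall_pos_mul_add_sq {A B : ℝ} (h : ∀ s : ℝ, 0 < s → 0 ≤ s * A + s ^ 2 * B) :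
    0 ≤ A := by
  refine nonneg_of_forall_pos_sq_mul_add (B := B) fun s hs => ?_
  have h1 := mul_nonneg (pow_pos hs 3).le (h s⁻¹ (inv_pos.2 hs))
  have h2 : s ^ 3 * (s⁻¹ * A + s⁻¹ ^ 2 * B) = s ^ 2 * A + s * B := by
    field_simp
  rwa [h2] at h1

/-- A symmetric matrix with zero row sums and nonpositive off-diagonal entries has a nonnegative
quadratic form. -/
lemma quadratic_form_nonneg_of_row_sum_eq_zero {ι : Type*} [Fintype ι] {M : Matrix ι ι ℝ}
    (hM : M.IsSymm) (hrow : ∀ i, ∑ j, M i j = 0) (hoff : ∀ i j, i ≠ j → M i j ≤ 0) (v : ι → ℝ) :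
    0 ≤ ∑ i, ∑ j, v i * M i j * v j := by
  have h1 : ∑ i, ∑ j, v i ^ 2 * M i j = 0 := by simp [← Finset.mul_sum, hrow]
  have h2 : ∑ i, ∑ j, v j ^ 2 * M i j = 0 := by
    rw [Finset.sum_comm, ← h1]
    exact Finset.sum_congr rfl fun i _ => Finset.sum_congr rfl fun j _ => by rw [hM.apply]
  have h3 : 0 ≤ ∑ i, ∑ j, -(M i j) * (v i - v j) ^ 2 := by
    refine Finset.sum_nonneg fun i _ => Finset.sum_nonneg fun j _ => ?_
    rcases eq_or_ne i j with rfl | hij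
    · simp
    · exact mul_nonneg (neg_nonneg.2 (hoff i j hij)) (sq_nonneg _)
  have h4 : ∑ i, ∑ j, -(M i j) * (v i - v j) ^ 2 =
      2 * (∑ i, ∑ j, v i * M i j * v j) - ∑ i, ∑ j, v i ^ 2 * M i j
        - ∑ i, ∑ j, v j ^ 2 * M i j := by
    simp only [Finset.mul_sum, ← Finset.sum_sub_distrib]
    exact Finset.sum_congr rfl fun i _ => Finset.sum_congr rfl fun j _ => by ring
  linarith

/-- The quadratic form of `α + Diag(p)` in coordinates. -/
lemma dotProduct_add_diagonal_mulVec {ι : Type*} [Fintype ι] [DecidableEq ι] (α : Matrix ι ι ℝ)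
    (p w : ι → ℝ) :
    w ⬝ᵥ (α + Matrix.diagonal p) *ᵥ w =
      ∑ j, ∑ k, w j * α j k * w k + ∑ j, p j * w j ^ 2 := by
  rw [Matrix.add_mulVec, dotProduct_add]
  congr 1
  · simp only [dotProduct, mulVec, Finset.mul_sum, mul_assoc]
  · simp only [dotProduct, Matrix.mulVec_diagonal]
    exact Finset.sum_congr rfl fun j _ => by ring

/-- If `α + Diag(π x) Diag(x)⁻¹` is positive semidefinite on the open orthant, then the associated
form `v ↦ vᵀ (Diag(x) α Diag(x) + Diag(π x) Diag(x)) v` is nonnegative on the closed orthant. -/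
lemma orthant_form_nonneg {ι : Type*} [Fintype ι] [DecidableEq ι] {α : Matrix ι ι ℝ}
    {π : ι → ι → ℝ}
    (h : ∀ x : ι → ℝ, (∀ k, 0 < x k) →
      (α + Matrix.diagonal (fun j => (∑ k, π j k * x k) / x j)).PosSemidef)
    (x v : ι → ℝ) (hx : ∀ k, 0 ≤ x k) :
    0 ≤ ∑ j, ∑ k, (x j * v j) * α j k * (x k * v k)
      + ∑ j, x j * (∑ k, π j k * x k) * v j ^ 2 := by
  have hpos : ∀ y : ι → ℝ, (∀ k, 0 < y k) →
      0 ≤ ∑ j, ∑ k, (y j * v j) * α j k * (y k * v k)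
        + ∑ j, y j * (∑ k, π j k * y k) * v j ^ 2 := by
    intro y hy
    have := (h y hy).dotProduct_mulVec_nonneg (fun j => y j * v j)
    rw [star_trivial, dotProduct_add_diagonal_mulVec] at this
    refine this.trans_eq ?_
    congr 1
    refine Finset.sum_congr rfl fun j _ => ?_
    have := (hy j).ne'
    field_simp
  have hcont : Continuous fun ε : ℝ =>
      ∑ j, ∑ k, ((x j + ε) * v j) * α j k * ((x k + ε) * v k)
        + ∑ j, (x j + ε) * (∑ k, π j k * (x k + ε)) * v j ^ 2 := by
    fun_prop
  have hlim := (hcont.tendsto 0).mono_left (nhdsWithin_le_nhds (s := Set.Ioi 0))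
  simp only [add_zero] at hlim
  refine ge_of_tendsto hlim ?_
  filter_upwards [self_mem_nhdsWithin] with ε hε
  exact hpos (fun k => x k + ε) fun k => add_pos_of_nonneg_of_pos (hx k) hε

/-- Recession argument: the part of degree two of a form that is nonnegative on the orthant is
nonnegative. -/
lemma posSemidef_of_orthant_form_nonneg {ι : Type*} [Fintype ι] [DecidableEq ι]
    {α : Matrix ι ι ℝ} {π : ι → ι → ℝ} {θ : ι → ℝ} (hα : α.IsSymm)
    (h : ∀ y w : ι → ℝ, (∀ k, 0 ≤ y k) → 0 ≤ ∑ j, ∑ k, w j *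
      (α j k * y j * y k + if j = k then y j * (θ j + ∑ l, π j l * y l) else 0) * w k)
    (x : ι → ℝ) (hx : ∀ k, 0 < x k) :
    (α + Matrix.diagonal (fun j => (∑ k, π j k * x k) / x j)).PosSemidef := by
  refine .of_dotProduct_mulVec_nonneg ?_ fun v => ?_
  · rw [Matrix.IsHermitian, Matrix.conjTranspose_eq_transpose_of_trivial]
    exact hα.add (Matrix.isSymm_diagonal _)
  rw [star_trivial, dotProduct_add_diagonal_mulVec]
  refine nonneg_of_forall_pos_sq_mul_add (B := ∑ j, (v j / x j) ^ 2 * x j * θ j) fun s hs => ?_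
  refine (h (fun k => s * x k) (fun k => v k / x k) fun k => (mul_pos hs (hx k)).le).trans_eq ?_
  simp only [mul_add, add_mul, Finset.sum_add_distrib, mul_ite, ite_mul, mul_zero, zero_mul,
    Finset.sum_ite_eq, Finset.mem_univ, if_true]
  have h1 : ∑ j, ∑ k, v j / x j * (α j k * (s * x j) * (s * x k)) * (v k / x k) =
      s ^ 2 * ∑ j, ∑ k, v j * α j k * v k := by
    simp only [Finset.mul_sum]
    refine Finset.sum_congr rfl fun j _ => Finset.sum_congr rfl fun k _ => ?_
    have := (hx j).ne'
    have := (hx k).ne'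
    field_simp
  have h2 : ∑ j, v j / x j * (s * x j * θ j) * (v j / x j) =
      s * ∑ j, (v j / x j) ^ 2 * x j * θ j := by
    rw [Finset.mul_sum]
    exact Finset.sum_congr rfl fun j _ => by ring
  have h3 : ∑ j, v j / x j * (s * x j * ∑ l, π j l * (s * x l)) * (v j / x j) =
      s ^ 2 * ∑ j, (∑ k, π j k * x k) / x j * v j ^ 2 := by
    rw [Finset.mul_sum]
    refine Finset.sum_congr rfl fun j _ => ?_
    have h4 : ∑ l, π j l * (s * x l) = s * ∑ l, π j l * x l := by
      rw [Finset.mul_sum]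
      exact Finset.sum_congr rfl fun l _ => by ring
    rw [h4]
    have := (hx j).ne'
    field_simp
  rw [h1, h2, h3]
  ring

/-- Shape and sign constraints forced on a diffusion matrix by positive semidefiniteness and
tangency on the product of a simplex and an orthant. -/
lemma exists_parameters {d m : ℕ} (hd : 2 ≤ d)
    (c : ((Fin d ⊕ Fin m) → ℝ) → Matrix (Fin d ⊕ Fin m) (Fin d ⊕ Fin m) ℝ)
    (hsymm : ∀ x, (c x).IsSymm)
    (hpoly : ∃ P : (Fin d ⊕ Fin m) → (Fin d ⊕ Fin m) → MvPolynomial (Fin d ⊕ Fin m) ℝ,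
        (∀ k l, (P k l).totalDegree ≤ 2) ∧
        ∀ x k l, c x k l = MvPolynomial.eval x (P k l))
    (hpsd : ∀ x, (∀ k, 0 ≤ x k) → ∑ i : Fin d, x (Sum.inl i) = 1 → (c x).PosSemidef)
    (hker : ∀ j x, (∀ k, 0 ≤ x k) → ∑ i : Fin d, x (Sum.inl i) = 1 → x j = 0 →
      (c x) *ᵥ (Pi.single j 1) = 0)
    (hrow : ∀ (i : Fin d) x, (∀ k, 0 ≤ x k) → ∑ i : Fin d, x (Sum.inl i) = 1 →
      ∑ j : Fin d, c x (Sum.inl i) (Sum.inl j) = 0) :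
    ∃ (γ : Fin d → Fin d → ℝ) (θ : Fin m → Fin d → ℝ) (π : Fin m → Fin m → ℝ)
        (φ : Fin m → ℝ) (α : Matrix (Fin m) (Fin m) ℝ),
      (∀ i j, γ i j = γ j i) ∧
      (∀ i j, i ≠ j → 0 ≤ γ i j) ∧
      (∀ j k, 0 ≤ π j k) ∧ (∀ j, π j j = 0) ∧
      (∀ j i, max (-(θ j i)) 0 ≤ φ j) ∧
      α.IsSymm ∧
      (∀ xJ : Fin m → ℝ, (∀ k, 0 < xJ k) →
        (α + Matrix.diagonal (fun j => (∑ k, π j k * xJ k) / xJ j)).PosSemidef) ∧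
      (∀ x ∈ {x : (Fin d ⊕ Fin m) → ℝ | (∀ k, 0 ≤ x k) ∧ (∀ i : Fin d, x (Sum.inl i) ≤ 1) ∧
        (∑ i : Fin d, x (Sum.inl i)) = 1},
        (∀ i : Fin d,
          c x (Sum.inl i) (Sum.inl i) =
            ∑ j ∈ Finset.univ.erase i, γ i j * x (Sum.inl i) * x (Sum.inl j)) ∧
        (∀ i j : Fin d, i ≠ j →
          c x (Sum.inl i) (Sum.inl j) = -(γ i j * x (Sum.inl i) * x (Sum.inl j))) ∧
        (∀ (i : Fin d) (j : Fin m), c x (Sum.inl i) (Sum.inr j) = 0) ∧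
        (∀ j : Fin m,
          c x (Sum.inr j) (Sum.inr j) =
            α j j * (x (Sum.inr j)) ^ 2 +
              x (Sum.inr j) * (φ j + (∑ i : Fin d, θ j i * x (Sum.inl i)) +
                (∑ k : Fin m, π j k * x (Sum.inr k)))) ∧
        (∀ j k : Fin m, j ≠ k →
          c x (Sum.inr j) (Sum.inr k) = α j k * x (Sum.inr j) * x (Sum.inr k))) := by
  obtain ⟨P, hdeg, hP⟩ := hpoly
  choose Q hQs hQ using fun k l =>
    exists_quadratic_form (Sum.elim (fun _ => 1) (fun _ => 0)) (P k l) (hdeg k l)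
  have hcQ : ∀ x, ∑ i : Fin d, x (Sum.inl i) = 1 → ∀ k l, c x k l = x ⬝ᵥ Q k l *ᵥ x := by
    intro x hx k l
    rw [hP, hQ k l x (by simpa [dotProduct] using hx)]
  have hcol : ∀ j x, (∀ k, 0 ≤ x k) → ∑ i : Fin d, x (Sum.inl i) = 1 → x j = 0 →
      ∀ k, c x k j = 0 := by
    intro j x hx hs hj k
    simpa using congrFun (hker j x hx hs hj) k
  have hQr : ∀ k j a b, a ≠ j → b ≠ j → Q k j a b = 0 := fun k j =>
    coeff_eq_zero_of_vanish_on_facet hd (hQs k j) fun x hx hs hj => by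
      rw [← hcQ x hs]
      exact hcol j x hx hs hj k
  have hQl : ∀ k j a b, a ≠ k → b ≠ k → Q k j a b = 0 := fun k j =>
    coeff_eq_zero_of_vanish_on_facet hd (hQs k j) fun x hx hs hj => by
      rw [← hcQ x hs, ← (hsymm x).apply]
      exact hcol k x hx hs hj j
  have hoff : ∀ x, ∑ i : Fin d, x (Sum.inl i) = 1 → ∀ k l, k ≠ l →
      c x k l = 2 * Q k l k l * x k * x l := fun x hs k l hkl => by
    rw [hcQ x hs, quadratic_form_eq_mul_mul (hQs k l) hkl (hQl k l) (hQr k l)]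
  have hdiag : ∀ x, ∑ i : Fin d, x (Sum.inl i) = 1 → ∀ j : Fin m, c x (Sum.inr j) (Sum.inr j) =
      Q (.inr j) (.inr j) (.inr j) (.inr j) * x (.inr j) ^ 2 + x (.inr j) *
        ((∑ i : Fin d, 2 * Q (.inr j) (.inr j) (.inr j) (.inl i) * x (.inl i)) +
          ∑ k : Fin m, (if k = j then 0 else 2 * Q (.inr j) (.inr j) (.inr j) (.inr k))
            * x (.inr k)) := by
    intro x hs j
    rw [hcQ x hs, quadratic_form_eq_mul (hQs _ _) (hQr _ _)]
    have hsplit : ∑ a ∈ univ.erase (Sum.inr j : Fin d ⊕ Fin m),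
        2 * Q (.inr j) (.inr j) (.inr j) a * x a =
        (∑ i : Fin d, 2 * Q (.inr j) (.inr j) (.inr j) (.inl i) * x (.inl i)) +
          ∑ k : Fin m, (if k = j then 0 else 2 * Q (.inr j) (.inr j) (.inr j) (.inr k))
            * x (.inr k) := by
      rw [← Finset.filter_ne', Finset.sum_filter, Fintype.sum_sum_type]
      simp [ite_mul]
    rw [hsplit]
    ring
  -- Points with simplex part a vertex.
  have hvsum : ∀ (i : Fin d) (y : Fin m → ℝ),
      ∑ k : Fin d, (Sum.elim (Pi.single i 1) y : Fin d ⊕ Fin m → ℝ) (Sum.inl k) = 1 := by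
    intro i y
    simp
  have hvnn : ∀ (i : Fin d) (y : Fin m → ℝ), (∀ k, 0 ≤ y k) →
      ∀ k, 0 ≤ (Sum.elim (Pi.single i 1) y : Fin d ⊕ Fin m → ℝ) k := by
    rintro i y hy (k | k)
    · exact (Pi.single_nonneg.2 zero_le_one : (0 : Fin d → ℝ) ≤ Pi.single i 1) k
    · exact hy k
  have hvdiag : ∀ (i : Fin d) (y : Fin m → ℝ), (∀ k, 0 ≤ y k) → ∀ j,
      0 ≤ Q (.inr j) (.inr j) (.inr j) (.inr j) * y j ^ 2 + y j *
        (2 * Q (.inr j) (.inr j) (.inr j) (.inl i) +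
          ∑ k : Fin m, (if k = j then 0 else 2 * Q (.inr j) (.inr j) (.inr j) (.inr k)) * y k) := by
    intro i y hy j
    have h := (hpsd _ (hvnn i y hy) (hvsum i y)).diag_nonneg (i := Sum.inr j)
    rw [hdiag _ (hvsum i y)] at h
    simpa [Pi.single_apply] using h
  have hcross : ∀ (i : Fin d) (j : Fin m), Q (.inl i) (.inr j) (.inl i) (.inr j) = 0 := by
    intro i j
    have hy : ∀ k : Fin m, (0 : ℝ) ≤ (fun _ => 1) k := fun _ => zero_le_one
    have hii : c (Sum.elim (Pi.single i 1) fun _ => 1) (.inl i) (.inl i) = 0 := by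
      refine Eq.trans (Eq.symm ?_) (hrow i _ (hvnn i _ hy) (hvsum i _))
      refine Finset.sum_eq_single i (fun k _ hk => ?_) fun h => absurd (Finset.mem_univ i) h
      exact hcol (Sum.inl k) _ (hvnn i _ hy) (hvsum i _) (Pi.single_eq_of_ne hk 1) _
    have hz := ((hpsd _ (hvnn i _ hy) (hvsum i _)).dotProduct_mulVec_zero_iff
      (Pi.single (Sum.inl i) 1)).1 (by simpa using hii)
    have hji : c (Sum.elim (Pi.single i 1) fun _ => 1) (.inr j) (.inl i) = 0 := by
      simpa using congrFun hz (Sum.inr j)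
    rw [← (hsymm _).apply, hoff _ (hvsum i _) _ _ Sum.inl_ne_inr] at hji
    simpa using hji
  have hd0 : (0 : ℝ) < d := by exact_mod_cast (by omega : 0 < d)
  have hoffsymm : ∀ k l, k ≠ l → Q k l k l = Q l k l k := by
    intro k l hkl
    let x : Fin d ⊕ Fin m → ℝ := Sum.elim (fun _ => (d : ℝ)⁻¹) fun _ => 1
    have hx : ∀ k, x k ≠ 0 := by
      rintro (k | k)
      · exact (inv_pos.2 hd0).ne'
      · exact one_ne_zero
    have hs : ∑ i : Fin d, x (Sum.inl i) = 1 := by simp [x, hd0.ne']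
    have h := (hsymm x).apply k l
    rw [hoff x hs k l hkl, hoff x hs l k hkl.symm] at h
    refine mul_right_cancel₀ (mul_ne_zero (hx k) (hx l)) ?_
    linarith
  have hθ : ∀ (j : Fin m) (i : Fin d), 0 ≤ 2 * Q (.inr j) (.inr j) (.inr j) (.inl i) := by
    intro j i
    refine nonneg_of_forall_pos_mul_add_sq (B := Q (.inr j) (.inr j) (.inr j) (.inr j))
      fun s hs => ?_
    have h := hvdiag i (Pi.single j s)
      (fun k => (Pi.single_nonneg.2 hs.le : (0 : Fin m → ℝ) ≤ Pi.single j s) k) j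
    simp [Pi.single_apply] at h
    linarith
  have hrowx : ∀ x, (∀ k, 0 ≤ x k) → ∑ i : Fin d, x (Sum.inl i) = 1 → ∀ i : Fin d,
      c x (.inl i) (.inl i) = ∑ j ∈ univ.erase i,
        -2 * Q (.inl i) (.inl j) (.inl i) (.inl j) * x (.inl i) * x (.inl j) := by
    intro x hx hs i
    have h := hrow i x hx hs
    rw [← Finset.add_sum_erase _ _ (Finset.mem_univ i)] at h
    rw [eq_neg_of_add_eq_zero_left h, ← Finset.sum_neg_distrib]
    refine Finset.sum_congr rfl fun j hj => ?_
    rw [hoff x hs _ _ (by simpa using (Finset.ne_of_mem_erase hj).symm)]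
    ring
  let i₀ : Fin d := ⟨0, by omega⟩
  have hαs : (Matrix.of fun j k => if j = k then Q (.inr j) (.inr j) (.inr j) (.inr j)
      else 2 * Q (.inr j) (.inr k) (.inr j) (.inr k) : Matrix (Fin m) (Fin m) ℝ).IsSymm := by
    ext j k
    rcases eq_or_ne j k with rfl | hjk
    · simp
    · simp [hjk, hjk.symm, hoffsymm (.inr k) (.inr j) (by simpa using hjk.symm)]
  refine ⟨fun i j => -2 * Q (.inl i) (.inl j) (.inl i) (.inl j),
    fun j i => 2 * Q (.inr j) (.inr j) (.inr j) (.inl i),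
    fun j k => if k = j then 0 else 2 * Q (.inr j) (.inr j) (.inr j) (.inr k), fun _ => 0,
    Matrix.of fun j k => if j = k then Q (.inr j) (.inr j) (.inr j) (.inr j)
      else 2 * Q (.inr j) (.inr k) (.inr j) (.inr k), ?_, ?_, ?_, ?_, ?_, hαs, ?_, ?_⟩
  · intro i j
    rcases eq_or_ne i j with rfl | hij
    · rfl
    · simp only [hoffsymm (.inl i) (.inl j) (by simpa using hij)]
  · intro i j hij
    let x : Fin d ⊕ Fin m → ℝ := Sum.elim (Pi.single i 2⁻¹ + Pi.single j 2⁻¹) 0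
    have hx : ∀ k, 0 ≤ x k := by
      rintro (k | k)
      · have hsingle : (0 : Fin d → ℝ) ≤ Pi.single i 2⁻¹ + Pi.single j 2⁻¹ :=
          add_nonneg (Pi.single_nonneg.2 (by norm_num)) (Pi.single_nonneg.2 (by norm_num))
        exact hsingle k
      · exact le_rfl
    have hs : ∑ k : Fin d, x (Sum.inl k) = 1 := by
      simp only [x, Sum.elim_inl, Pi.add_apply, Finset.sum_add_distrib, Finset.sum_pi_single',
        Finset.mem_univ, if_true]
      norm_num
    have h := (hpsd x hx hs).diag_nonneg (i := Sum.inl i)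
    rw [hrowx x hx hs, Finset.sum_eq_single j
      (fun k hk hkj => by simp [x, Finset.ne_of_mem_erase hk, hkj])
      (fun hj => absurd (Finset.mem_erase.2 ⟨hij.symm, Finset.mem_univ j⟩) hj)] at h
    simp [x, hij, hij.symm] at h
    linarith
  · intro j k
    rcases eq_or_ne k j with rfl | hkj
    · simp
    simp only [hkj, if_false]
    refine nonneg_of_forall_pos_sq_mul_add (B := Q (.inr j) (.inr j) (.inr j) (.inr j) +
      2 * Q (.inr j) (.inr j) (.inr j) (.inl i₀)) fun s hs => ?_
    have hy : (0 : Fin m → ℝ) ≤ Pi.single j 1 + Pi.single k s :=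
      add_nonneg (Pi.single_nonneg.2 zero_le_one) (Pi.single_nonneg.2 hs.le)
    have h := hvdiag i₀ _ hy j
    simp [Pi.single_apply, mul_add, Finset.sum_add_distrib, hkj, hkj.symm] at h
    nlinarith [mul_nonneg hs.le h]
  · intro j
    simp
  · intro j i
    have := hθ j i
    simpa using this
  · refine posSemidef_of_orthant_form_nonneg
      (θ := fun j => 2 * Q (.inr j) (.inr j) (.inr j) (.inl i₀)) hαs fun y w hy => ?_
    have h := (hpsd _ (hvnn i₀ y hy) (hvsum i₀ y)).dotProduct_mulVec_nonneg (Sum.elim 0 w)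
    simp only [star_trivial, dotProduct, mulVec, Fintype.sum_sum_type, Sum.elim_inl, Sum.elim_inr,
      Pi.zero_apply, zero_mul, mul_zero, Finset.sum_const_zero, zero_add, Finset.mul_sum] at h
    refine h.trans_eq (Finset.sum_congr rfl fun j _ => Finset.sum_congr rfl fun k _ => ?_)
    rcases eq_or_ne j k with rfl | hjk
    · rw [hdiag _ (hvsum i₀ y)]
      simp [Pi.single_apply]
      ring
    · rw [hoff _ (hvsum i₀ y) _ _ (by simpa using hjk)]
      simp [hjk]
      ring
  · rintro x ⟨hx, -, hs⟩
    refine ⟨hrowx x hx hs, fun i j hij => ?_, fun i j => ?_, fun j => ?_, fun j k hjk => ?_⟩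
    · rw [hoff x hs _ _ (by simpa using hij)]
      ring
    · rw [hoff x hs _ _ Sum.inl_ne_inr, hcross]
      ring
    · rw [hdiag x hs]
      simp
    · rw [hoff x hs _ _ (by simpa using hjk)]
      simp [hjk]

/-- characterization of the admissible diffusion matrices `c` with polynomial
entries of degree at most 2 on the state space `D = Δ^d × ℝ_+^m`. Coordinates are indexed by
`Fin d ⊕ Fin m`, where `Sum.inl` gives the simplex coordinates (the index set `I`) and
`Sum.inr` the nonnegative coordinates (the index set `J`). -/
theorem statement3 (d m : ℕ) (hd : 2 ≤ d) (hm : 1 ≤ m)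
    (D : Set ((Fin d ⊕ Fin m) → ℝ))
    (hD : D = {x | (∀ k, 0 ≤ x k) ∧ (∀ i : Fin d, x (Sum.inl i) ≤ 1) ∧
        (∑ i : Fin d, x (Sum.inl i)) = 1})
    (c : ((Fin d ⊕ Fin m) → ℝ) → Matrix (Fin d ⊕ Fin m) (Fin d ⊕ Fin m) ℝ)
    (hsymm : ∀ x, (c x).IsSymm)
    (hpoly : ∃ P : (Fin d ⊕ Fin m) → (Fin d ⊕ Fin m) → MvPolynomial (Fin d ⊕ Fin m) ℝ,
        (∀ k l, (P k l).totalDegree ≤ 2) ∧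
        ∀ x k l, c x k l = MvPolynomial.eval x (P k l)) :
    -- condition (i)
    ((∀ x ∈ D, (c x).PosSemidef) ∧
     (∀ (j : Fin d ⊕ Fin m), ∀ x ∈ D, x j = 0 → (c x) *ᵥ (Pi.single j 1) = 0) ∧
     (∀ (i : Fin d), ∀ x ∈ D, (∑ j : Fin d, c x (Sum.inl i) (Sum.inl j)) = 0))
    ↔
    -- condition (ii)
    (∃ (γ : Fin d → Fin d → ℝ) (θ : Fin m → Fin d → ℝ) (π : Fin m → Fin m → ℝ)
        (φ : Fin m → ℝ) (α : Matrix (Fin m) (Fin m) ℝ),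
      (∀ i j, γ i j = γ j i) ∧
      (∀ i j, i ≠ j → 0 ≤ γ i j) ∧
      (∀ j k, 0 ≤ π j k) ∧ (∀ j, π j j = 0) ∧
      (∀ j i, max (-(θ j i)) 0 ≤ φ j) ∧
      α.IsSymm ∧
      (∀ xJ : Fin m → ℝ, (∀ k, 0 < xJ k) →
        (α + Matrix.diagonal (fun j => (∑ k, π j k * xJ k) / xJ j)).PosSemidef) ∧
      (∀ x ∈ D,
        (∀ i : Fin d,
          c x (Sum.inl i) (Sum.inl i) =
            ∑ j ∈ Finset.univ.erase i, γ i j * x (Sum.inl i) * x (Sum.inl j)) ∧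
        (∀ i j : Fin d, i ≠ j →
          c x (Sum.inl i) (Sum.inl j) = -(γ i j * x (Sum.inl i) * x (Sum.inl j))) ∧
        (∀ (i : Fin d) (j : Fin m), c x (Sum.inl i) (Sum.inr j) = 0) ∧
        (∀ j : Fin m,
          c x (Sum.inr j) (Sum.inr j) =
            α j j * (x (Sum.inr j)) ^ 2 +
              x (Sum.inr j) * (φ j + (∑ i : Fin d, θ j i * x (Sum.inl i)) +
                (∑ k : Fin m, π j k * x (Sum.inr k)))) ∧
        (∀ j k : Fin m, j ≠ k →
          c x (Sum.inr j) (Sum.inr k) = α j k * x (Sum.inr j) * x (Sum.inr k)))) := by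
  subst hD
  have hmem : ∀ x : (Fin d ⊕ Fin m) → ℝ, (∀ k, 0 ≤ x k) → (∑ i : Fin d, x (Sum.inl i)) = 1 →
      x ∈ {x : (Fin d ⊕ Fin m) → ℝ | (∀ k, 0 ≤ x k) ∧ (∀ i : Fin d, x (Sum.inl i) ≤ 1) ∧
        (∑ i : Fin d, x (Sum.inl i)) = 1} := fun x hx hs =>
    ⟨hx, fun i => hs ▸ Finset.single_le_sum (fun k _ => hx (Sum.inl k)) (Finset.mem_univ i), hs⟩
  constructor
  · rintro ⟨hpsd, hker, hrow⟩
    exact exists_parameters hd c hsymm hpoly (fun x hx hs => hpsd x (hmem x hx hs))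
      (fun j x hx hs => hker j x (hmem x hx hs)) (fun i x hx hs => hrow i x (hmem x hx hs))
  · rintro ⟨γ, θ, π, φ, α, hγs, hγ, -, -, hφ, -, hα, hc⟩
    have hrow : ∀ (i : Fin d), ∀ x ∈ {x : (Fin d ⊕ Fin m) → ℝ | (∀ k, 0 ≤ x k) ∧
        (∀ i : Fin d, x (Sum.inl i) ≤ 1) ∧ (∑ i : Fin d, x (Sum.inl i)) = 1},
        (∑ j : Fin d, c x (Sum.inl i) (Sum.inl j)) = 0 := by
      intro i x hx
      obtain ⟨h1, h2, -⟩ := hc x hx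
      rw [← Finset.add_sum_erase _ _ (Finset.mem_univ i), h1 i, ← Finset.sum_add_distrib]
      refine Finset.sum_eq_zero fun j hj => ?_
      rw [h2 i j (Finset.ne_of_mem_erase hj).symm]
      ring
    refine ⟨fun x hx => ?_, fun j x hx hxj => ?_, hrow⟩
    · obtain ⟨h1, h2, h3, h4, h5⟩ := hc x hx
      refine .of_dotProduct_mulVec_nonneg (hsymm x) fun v => ?_
      have hI : 0 ≤ ∑ i : Fin d, ∑ j : Fin d,
          v (.inl i) * c x (.inl i) (.inl j) * v (.inl j) := by
        refine quadratic_form_nonneg_of_row_sum_eq_zero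
          (M := Matrix.of fun i j : Fin d => c x (.inl i) (.inl j)) ?_ (fun i => hrow i x hx) ?_
          (fun i => v (.inl i))
        · ext i j
          exact (hsymm x).apply _ _
        · intro i j hij
          rw [Matrix.of_apply, h2 i j hij, neg_nonpos]
          exact mul_nonneg (mul_nonneg (hγ i j hij) (hx.1 _)) (hx.1 _)
      have hJ := orthant_form_nonneg hα (fun j => x (.inr j)) (fun j => v (.inr j))
        fun k => hx.1 _
      have hdrift : 0 ≤ ∑ j : Fin m,
          x (.inr j) * (φ j + ∑ i : Fin d, θ j i * x (.inl i)) * v (.inr j) ^ 2 := by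
        refine Finset.sum_nonneg fun j _ =>
          mul_nonneg (mul_nonneg (hx.1 _) ?_) (sq_nonneg _)
        have hφx : φ j = ∑ i : Fin d, φ j * x (.inl i) := by
          rw [← Finset.mul_sum, hx.2.2, mul_one]
        rw [hφx, ← Finset.sum_add_distrib]
        refine Finset.sum_nonneg fun i _ => ?_
        rw [← add_mul]
        refine mul_nonneg ?_ (hx.1 _)
        have := (le_max_left _ _).trans (hφ j i)
        linarith
      have hJJ : ∀ j k : Fin m, v (.inr j) * (c x (.inr j) (.inr k) * v (.inr k)) =
          (x (.inr j) * v (.inr j)) * α j k * (x (.inr k) * v (.inr k)) +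
            if j = k then x (.inr j) * (φ j + ∑ i : Fin d, θ j i * x (.inl i)) * v (.inr j) ^ 2
              + x (.inr j) * (∑ k, π j k * x (.inr k)) * v (.inr j) ^ 2 else 0 := by
        intro j k
        rcases eq_or_ne j k with rfl | hjk
        · rw [h4 j, if_pos rfl]
          ring
        · rw [h5 j k hjk, if_neg hjk]
          ring
      have h3' : ∀ (i : Fin d) (j : Fin m), c x (.inr j) (.inl i) = 0 := fun i j => by
        rw [(hsymm x).apply, h3]
      simp only [star_trivial, dotProduct, mulVec, Fintype.sum_sum_type, h3, h3', zero_mul,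
        Finset.sum_const_zero, add_zero, zero_add, Finset.mul_sum, hJJ, Finset.sum_add_distrib,
        Finset.sum_ite_eq, Finset.mem_univ, if_true]
      simp only [mul_assoc, Finset.mul_sum] at hI hJ hdrift ⊢
      linarith
    · obtain ⟨h1, h2, h3, h4, h5⟩ := hc x hx
      ext k
      rw [Matrix.mulVec_single_one, Matrix.col_apply, Pi.zero_apply]
      rcases k with k | k <;> rcases j with j | j
      · rcases eq_or_ne k j with rfl | hkj
        · rw [h1, hxj]
          simp
        · rw [h2 k j hkj, hxj]
          simp
      · exact h3 k j
      · rw [(hsymm x).apply]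
        exact h3 j k
      · rcases eq_or_ne k j with rfl | hkj
        · rw [h4, hxj]
          ring
        · rw [h5 k j hkj, hxj]
          ring
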